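/- arXiv:1604.00941 — 2 statements merged into one kernel-verified Lean document; each statement's English description precedes it below -/
import Mathlib

section
/- For every τ in the complex upper half-plane ℍ, one has η(16τ)⁹/(η(8τ)³·η(32τ)³) = ∑_{n∈ℤ} (−1)ⁿ(4n+1)·e^{2πiτ(4n+1)²}, where the series on the right converges absolutely. (This is the eta-theta identity E₂(τ) = η(16τ)⁹/(η(8τ)³η(32τ)³) = ∑_{n∈ℤ}(−1)ⁿ(4n+1)q^{(4n+1)²} with q = e^{2πiτ}.) -/
open Complex

/-- The Dedekind eta function `η(τ) = e^{πiτ/12} ∏_{n≥1} (1 - e^{2πinτ})`. -/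
noncomputable def dedekindEta (τ : ℂ) : ℂ :=
  Complex.exp ((Real.pi : ℂ) * I * τ / 12) *
    ∏' n : ℕ, (1 - Complex.exp (2 * (Real.pi : ℂ) * I * ((n : ℂ) + 1) * τ))

/-!
By the `q`-binomial theorem, `∏_{0 ≤ i ≤ 2n} (qⁿ - qⁱX)` is a polynomial in `X` whose coefficients
are Gaussian binomials, and it vanishes at `X = 1`. Equating the derivatives there gives the finite
identity `∑_{k ≤ n} (-1)ᵏ (2k + 1) q^(k(k+1)/2) [2n+1, n+1+k]_q = (q; q)ₙ²`, and `n → ∞` yields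
Jacobi's `∑_{k ≥ 0} (-1)ᵏ (2k + 1) q^(k(k+1)/2) = (q; q)_∞³`. Replacing `q` by `-q` turns the right
side into an eta quotient, because `(-q; -q)_∞ = (q²; q²)_∞³ / ((q; q)_∞ (q⁴; q⁴)_∞)`. The theorem
is the resulting identity with `q = exp (2πi · 8τ)`.
-/

open Finset Filter Topology

lemma sum_range_two_mul_add_two {M : Type*} [AddCommMonoid M] (a : ℕ → M) (n : ℕ) :
    ∑ j ∈ range (2 * n + 2), a j = ∑ k ∈ range (n + 1), (a (n - k) + a (n + 1 + k)) := by
  rw [show 2 * n + 2 = n + 1 + (n + 1) by ring, sum_range_add, ← sum_range_reflect,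
    sum_add_distrib]
  rfl

section CommRing

variable {R S : Type*} [CommRing R] [CommRing S]

/-- The finite `q`-Pochhammer symbol `(a; q)ₙ = (1 - a)(1 - aq)⋯(1 - aqⁿ⁻¹)`. -/
def qPochhammer (a q : R) (n : ℕ) : R := ∏ i ∈ range n, (1 - a * q ^ i)

lemma qPochhammer_succ (a q : R) (n : ℕ) :
    qPochhammer a q (n + 1) = qPochhammer a q n * (1 - a * q ^ n) :=
  prod_range_succ _ _

lemma map_qPochhammer (f : R →+* S) (a q : R) (n : ℕ) :
    f (qPochhammer a q n) = qPochhammer (f a) (f q) n := by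
  simp [qPochhammer]

lemma qPochhammer_X_ne_zero (n : ℕ) :
    qPochhammer (Polynomial.X : Polynomial ℤ) Polynomial.X n ≠ 0 := fun h ↦ by
  simpa [qPochhammer, Polynomial.eval_prod] using congrArg (Polynomial.eval 0) h

lemma prod_pow_sub_pow_of_lt (q : R) (n : ℕ) :
    ∏ i ∈ range n, (q ^ n - q ^ i) = (-1) ^ n * q ^ n.choose 2 * qPochhammer q q n := by
  induction n with
  | zero => simp [qPochhammer]
  | succ n ih =>
    have hfactor (i : ℕ) : q ^ (n + 1) - q ^ (i + 1) = q * (q ^ n - q ^ i) := by ring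
    rw [prod_range_succ', qPochhammer_succ, Nat.choose_succ_succ' n 1, Nat.choose_one_right]
    simp only [hfactor, prod_mul_distrib, prod_const, card_range, ih]
    ring

lemma prod_pow_sub_pow_of_gt (q : R) (n : ℕ) :
    ∏ i ∈ range n, (q ^ n - q ^ (n + 1 + i)) = q ^ (n * n) * qPochhammer q q n := by
  have hfactor (i : ℕ) : q ^ n - q ^ (n + 1 + i) = q ^ n * (1 - q * q ^ i) := by ring
  simp only [hfactor, prod_mul_distrib, prod_const, card_range, qPochhammer, ← pow_mul]

/-- The Gaussian binomial coefficient of `m` over `j` at `q`, defined by `q`-Pascal recursion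
rather than as a quotient, so that it makes sense at every element `q` of a ring. -/
def gaussBinom (q : R) : ℕ → ℕ → R
  | _, 0 => 1
  | 0, _ + 1 => 0
  | m + 1, j + 1 => gaussBinom q m j + q ^ (j + 1) * gaussBinom q m (j + 1)

@[simp]
lemma gaussBinom_zero_right (q : R) (m : ℕ) : gaussBinom q m 0 = 1 := by
  cases m <;> rfl

lemma gaussBinom_succ_succ (q : R) (m j : ℕ) :
    gaussBinom q (m + 1) (j + 1) = gaussBinom q m j + q ^ (j + 1) * gaussBinom q m (j + 1) :=
  rfl

lemma gaussBinom_eq_zero_of_lt (q : R) {m j : ℕ} (h : m < j) : gaussBinom q m j = 0 := by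
  induction m generalizing j with
  | zero => obtain ⟨j, rfl⟩ := Nat.exists_eq_succ_of_ne_zero h.ne'; rfl
  | succ m ih =>
    obtain ⟨j, rfl⟩ := Nat.exists_eq_succ_of_ne_zero (Nat.ne_zero_of_lt h)
    rw [Nat.succ_eq_add_one, gaussBinom_succ_succ, ih (by omega), ih (by omega), mul_zero, add_zero]

lemma map_gaussBinom (f : R →+* S) (q : R) (m j : ℕ) :
    f (gaussBinom q m j) = gaussBinom (f q) m j := by
  induction m generalizing j with
  | zero => cases j <;> simp [gaussBinom]
  | succ m ih => cases j <;> simp [gaussBinom_succ_succ, ih]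

lemma gaussBinom_self (q : R) (m : ℕ) : gaussBinom q m m = 1 := by
  induction m with
  | zero => rfl
  | succ m ih => simp [gaussBinom_succ_succ, ih, gaussBinom_eq_zero_of_lt]

lemma gaussBinom_add_mul_qPochhammer (q : R) (i j : ℕ) :
    gaussBinom q (i + j) j * (qPochhammer q q i * qPochhammer q q j) =
      qPochhammer q q (i + j) := by
  induction i generalizing j with
  | zero => simp [gaussBinom_self, qPochhammer]
  | succ i ihi =>
    induction j with
    | zero => simp [qPochhammer]
    | succ j ihj =>
      have hi := ihi (j + 1)
      have hadd : i + 1 + j = i + (j + 1) := by ring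
      rw [hadd] at ihj
      rw [← add_assoc (i + 1), gaussBinom_succ_succ, hadd, qPochhammer_succ q q (i + (j + 1))]
      rw [qPochhammer_succ q q i] at ihj ⊢
      rw [qPochhammer_succ q q j] at hi ⊢
      linear_combination (1 - q * q ^ j) * ihj + q ^ (j + 1) * (1 - q * q ^ i) * hi

-- The identity holds at the indeterminate of `ℤ[X]`, where the factors `1 - Xⁱ` can be cancelled,
-- and specializes from there to every commutative ring.
lemma gaussBinom_symm_add (q : R) (i j : ℕ) :
    gaussBinom q (i + j) i = gaussBinom q (i + j) j := by
  suffices h : gaussBinom (Polynomial.X : Polynomial ℤ) (i + j) i =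
      gaussBinom Polynomial.X (i + j) j by
    simpa only [map_gaussBinom, Polynomial.coe_eval₂RingHom, Polynomial.eval₂_X] using
      congrArg (Polynomial.eval₂RingHom (Int.castRingHom R) q) h
  apply mul_right_cancel₀ (mul_ne_zero (qPochhammer_X_ne_zero i) (qPochhammer_X_ne_zero j))
  rw [gaussBinom_add_mul_qPochhammer, add_comm i j, mul_comm (qPochhammer _ _ i),
    gaussBinom_add_mul_qPochhammer]

theorem prod_add_pow_mul_eq_sum_gaussBinom (q x y : R) (m : ℕ) :
    ∏ i ∈ range m, (x + q ^ i * y) =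
      ∑ j ∈ range (m + 1), q ^ j.choose 2 * gaussBinom q m j * x ^ (m - j) * y ^ j := by
  induction m generalizing y with
  | zero => simp
  | succ m ih =>
    have hx : x * ∑ j ∈ range (m + 1), q ^ j.choose 2 * gaussBinom q m j * x ^ (m - j) * (q * y) ^ j
        = ∑ j ∈ range (m + 1), q ^ (j + 1).choose 2 * (q ^ (j + 1) * gaussBinom q m (j + 1)) *
            x ^ (m - j) * y ^ (j + 1) + x ^ (m + 1) := by
      trans ∑ j ∈ range (m + 2),
        q ^ j.choose 2 * (q ^ j * gaussBinom q m j) * x ^ (m + 1 - j) * y ^ j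
      · rw [sum_range_succ _ (m + 1), gaussBinom_eq_zero_of_lt q m.lt_succ_self, mul_sum]
        simp only [mul_zero, zero_mul, add_zero]
        refine sum_congr rfl fun j hj ↦ ?_
        rw [Nat.sub_add_comm (mem_range_succ_iff.mp hj)]
        ring
      · rw [sum_range_succ']
        simp
    have hy : y * ∑ j ∈ range (m + 1), q ^ j.choose 2 * gaussBinom q m j * x ^ (m - j) * (q * y) ^ j
        = ∑ j ∈ range (m + 1), q ^ (j + 1).choose 2 * gaussBinom q m j *
            x ^ (m - j) * y ^ (j + 1) := by
      rw [mul_sum]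
      refine sum_congr rfl fun j _ ↦ ?_
      rw [Nat.choose_succ_succ' j 1, Nat.choose_one_right]
      ring
    have hshift (i : ℕ) : x + q ^ (i + 1) * y = x + q ^ i * (q * y) := by ring
    calc ∏ i ∈ range (m + 1), (x + q ^ i * y)
        = x * ∏ i ∈ range m, (x + q ^ i * (q * y)) + y * ∏ i ∈ range m, (x + q ^ i * (q * y)) := by
          rw [prod_range_succ', prod_congr rfl fun i _ ↦ hshift i]
          ring
      _ = ∑ j ∈ range (m + 1 + 1),
            q ^ j.choose 2 * gaussBinom q (m + 1) j * x ^ (m + 1 - j) * y ^ j := by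
          rw [ih, hx, hy, sum_range_succ' _ (m + 1)]
          simp only [gaussBinom_succ_succ, Nat.add_sub_add_right, mul_add, add_mul, sum_add_distrib]
          simp only [Nat.choose_zero_succ, pow_zero, gaussBinom_zero_right, mul_one, tsub_zero,
            one_mul]
          ring

-- Differentiate the `q`-binomial expansion of `∏ (qⁿ - qⁱX)` over `i ≤ 2n` at `X = 1`, where the
-- factor with `i = n` vanishes.
open Polynomial in
lemma sum_range_neg_one_pow_mul_gaussBinom (q : R) (n : ℕ) :
    ∑ j ∈ range (2 * n + 2), (-1) ^ j * (j : R) *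
        (q ^ (j.choose 2 + n * (2 * n + 1 - j)) * gaussBinom q (2 * n + 1) j) =
      (-1) ^ (n + 1) * (q ^ (n * n + (n + 1).choose 2) * qPochhammer q q n ^ 2) := by
  have hprod : ∏ i ∈ range (2 * n + 1), (C (q ^ n) + C q ^ i * -X) =
      (1 - X) * (C (q ^ n) * (∏ i ∈ range n, (C (q ^ n) + C q ^ i * -X)) *
        ∏ i ∈ range n, (C (q ^ n) + C q ^ (n + 1 + i) * -X)) := by
    rw [show 2 * n + 1 = n + 1 + n by ring, prod_range_add, prod_range_succ, C_pow]
    ring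
  have hleft : eval 1 (derivative (∏ i ∈ range (2 * n + 1), (C (q ^ n) + C q ^ i * -X))) =
      -(q ^ n * (∏ i ∈ range n, (q ^ n - q ^ i)) * ∏ i ∈ range n, (q ^ n - q ^ (n + 1 + i))) := by
    rw [hprod, derivative_mul, eval_add, eval_mul, eval_mul]
    simp [eval_prod, sub_eq_add_neg]
  have hterm (j : ℕ) : C q ^ j.choose 2 * gaussBinom (C q) (2 * n + 1) j *
        C (q ^ n) ^ (2 * n + 1 - j) * (-X) ^ j =
      C ((-1) ^ j * (q ^ (j.choose 2 + n * (2 * n + 1 - j)) * gaussBinom q (2 * n + 1) j)) *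
        X ^ j := by
    rw [← map_gaussBinom, neg_pow (X : R[X])]
    simp only [C_mul, C_pow, C_neg, C_1, pow_add, pow_mul]
    ring
  have hderiv := congrArg (fun p ↦ eval 1 (derivative p))
    (prod_add_pow_mul_eq_sum_gaussBinom (C q) (C (q ^ n)) (-X) (2 * n + 1))
  simp only [hleft, hterm, derivative_sum, derivative_C_mul_X_pow, eval_finsetSum, eval_C_mul,
    eval_pow, eval_X, one_pow, mul_one, prod_pow_sub_pow_of_lt, prod_pow_sub_pow_of_gt] at hderiv
  calc _ = _ := sum_congr rfl fun j _ ↦ by ring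
    _ = _ := hderiv.symm
    _ = _ := by rw [Nat.choose_succ_succ' n 1, Nat.choose_one_right]; ring

-- The terms `j = n - k` and `j = n + 1 + k` of the sum above carry the same power of `q`, the
-- same Gaussian binomial coefficient and opposite signs.
lemma pow_mul_sum_gaussBinom (q : R) (n : ℕ) :
    q ^ (n * n + (n + 1).choose 2) * ∑ k ∈ range (n + 1), (-1) ^ k * (2 * k + 1) *
        q ^ (k + 1).choose 2 * gaussBinom q (2 * n + 1) (n + 1 + k) =
      q ^ (n * n + (n + 1).choose 2) * qPochhammer q q n ^ 2 := by
  have hlow (i k : ℕ) : i.choose 2 + (i + k) * (i + 2 * k + 1) =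
      (i + k) * (i + k) + (i + k + 1).choose 2 + (k + 1).choose 2 := by
    qify [Nat.cast_choose_two]
    ring
  have hhigh (i k : ℕ) : (i + 2 * k + 1).choose 2 + (i + k) * i =
      (i + k) * (i + k) + (i + k + 1).choose 2 + (k + 1).choose 2 := by
    qify [Nat.cast_choose_two]
    ring
  apply (isUnit_one.neg.pow (n + 1)).mul_left_cancel
  rw [← sum_range_neg_one_pow_mul_gaussBinom, sum_range_two_mul_add_two, mul_sum, mul_sum]
  refine sum_congr rfl fun k hk ↦ ?_
  obtain ⟨i, rfl⟩ := Nat.exists_eq_add_of_le' (mem_range_succ_iff.mp hk)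
  have hsymm : gaussBinom q (2 * (i + k) + 1) i =
      gaussBinom q (2 * (i + k) + 1) (i + 2 * k + 1) := by
    convert gaussBinom_symm_add q i (i + 2 * k + 1) using 2 <;> ring
  rw [Nat.add_sub_cancel, show i + k + 1 + k = i + 2 * k + 1 by ring,
    show 2 * (i + k) + 1 - i = i + 2 * k + 1 by omega,
    show 2 * (i + k) + 1 - (i + 2 * k + 1) = i by omega, hlow, hhigh, hsymm]
  have hsign : (-1 : R) ^ (i + 2 * k + 1) = -(-1) ^ i := by
    rw [pow_succ, pow_add, pow_mul, neg_one_sq, one_pow, mul_one, mul_neg_one]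
  have hsign' : (-1 : R) ^ (i + k + 1) * (-1) ^ k = -(-1) ^ i := by
    rw [← pow_add, ← hsign]
    ring
  rw [hsign]
  push_cast
  linear_combination (2 * (k : R) + 1) * q ^ ((i + k) * (i + k) + (i + k + 1).choose 2 +
    (k + 1).choose 2) * gaussBinom q (2 * (i + k) + 1) (i + 2 * k + 1) * hsign'

theorem sum_gaussBinom_eq_qPochhammer_sq (q : R) (n : ℕ) :
    ∑ k ∈ range (n + 1), (-1) ^ k * (2 * k + 1) * q ^ (k + 1).choose 2 *
      gaussBinom q (2 * n + 1) (n + 1 + k) = qPochhammer q q n ^ 2 := by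
  have h := mul_left_cancel₀ (pow_ne_zero _ Polynomial.X_ne_zero)
    (pow_mul_sum_gaussBinom (Polynomial.X : Polynomial ℤ) n)
  simpa only [map_sum, map_mul, map_pow, map_neg, map_add, map_one, map_natCast, map_ofNat,
    map_gaussBinom, map_qPochhammer, Polynomial.coe_eval₂RingHom, Polynomial.eval₂_X] using
    congrArg (Polynomial.eval₂RingHom (Int.castRingHom R) q) h

end CommRing

section NormedField

variable {K : Type*} [NormedField K]

/-- The infinite `q`-Pochhammer symbol `(a; q)_∞ = ∏_{n ≥ 0} (1 - aqⁿ)`, meaningful for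
`‖q‖ < 1`. -/
noncomputable def qPochhammerInf (a q : K) : K := ∏' n : ℕ, (1 - a * q ^ n)

lemma summable_norm_mul_pow (a : K) {q : K} (hq : ‖q‖ < 1) :
    Summable fun n : ℕ ↦ ‖-(a * q ^ n)‖ := by
  simpa using (summable_geometric_of_lt_one (norm_nonneg q) hq).mul_left ‖a‖

lemma summable_two_mul_add_one_mul_norm_pow_choose {q : K} (hq : ‖q‖ < 1) :
    Summable fun k : ℕ ↦ (2 * k + 1) * ‖q‖ ^ (k + 1).choose 2 := by
  have hlin : Summable fun k : ℕ ↦ (2 * k + 1) * ‖q‖ ^ k := by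
    have := summable_pow_mul_geometric_of_norm_lt_one 1 (r := ‖q‖) (by simpa using hq)
    refine ((this.mul_left 2).add
      (summable_geometric_of_lt_one (norm_nonneg q) hq)).congr fun k ↦ ?_
    ring
  refine hlin.of_nonneg_of_le (fun k ↦ by positivity) fun k ↦ ?_
  have hk : k ≤ (k + 1).choose 2 := by
    rw [Nat.choose_succ_succ' k 1, Nat.choose_one_right]
    exact Nat.le_add_right _ _
  gcongr ?_ * ?_
  exact pow_le_pow_of_le_one (norm_nonneg q) hq.le hk

lemma norm_neg_one_pow_mul_two_mul_add_one_mul_pow_choose_le (q : K) (k : ℕ) :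
    ‖(-1) ^ k * (2 * k + 1) * q ^ (k + 1).choose 2‖ ≤ (2 * k + 1) * ‖q‖ ^ (k + 1).choose 2 := by
  have hodd : ‖(2 * k + 1 : K)‖ ≤ 2 * k + 1 := by
    simpa using Nat.norm_cast_le (α := K) (2 * k + 1)
  simpa using mul_le_mul_of_nonneg_right hodd (by positivity)

lemma one_sub_mul_pow_ne_zero {a q : K} (ha : ‖a‖ < 1) (hq : ‖q‖ < 1) (n : ℕ) :
    1 - a * q ^ n ≠ 0 := by
  refine sub_ne_zero.mpr fun h ↦ ?_
  have hlt : ‖a * q ^ n‖ < 1 := by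
    rw [norm_mul, norm_pow]
    exact mul_lt_one_of_nonneg_of_lt_one_left (norm_nonneg a) ha (pow_le_one₀ (norm_nonneg q) hq.le)
  exact hlt.ne (by rw [← h, norm_one])

lemma qPochhammer_ne_zero {a q : K} (ha : ‖a‖ < 1) (hq : ‖q‖ < 1) (n : ℕ) :
    qPochhammer a q n ≠ 0 :=
  prod_ne_zero_iff.mpr fun i _ ↦ one_sub_mul_pow_ne_zero ha hq i

lemma gaussBinom_add_eq_div {q : K} (hq : ‖q‖ < 1) (i j : ℕ) :
    gaussBinom q (i + j) j =
      qPochhammer q q (i + j) / (qPochhammer q q i * qPochhammer q q j) := by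
  rw [eq_div_iff (mul_ne_zero (qPochhammer_ne_zero hq hq i) (qPochhammer_ne_zero hq hq j)),
    gaussBinom_add_mul_qPochhammer]

variable [CompleteSpace K]

lemma multipliable_one_sub_mul_pow (a : K) {q : K} (hq : ‖q‖ < 1) :
    Multipliable fun n : ℕ ↦ 1 - a * q ^ n := by
  simpa only [sub_eq_add_neg] using multipliable_one_add_of_summable (summable_norm_mul_pow a hq)

lemma tendsto_qPochhammer (a : K) {q : K} (hq : ‖q‖ < 1) :
    Tendsto (qPochhammer a q) atTop (𝓝 (qPochhammerInf a q)) :=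
  (multipliable_one_sub_mul_pow a hq).hasProd.tendsto_prod_nat

lemma qPochhammerInf_ne_zero {a q : K} (ha : ‖a‖ < 1) (hq : ‖q‖ < 1) :
    qPochhammerInf a q ≠ 0 := by
  simpa only [qPochhammerInf, sub_eq_add_neg] using tprod_one_add_ne_zero_of_summable
    (fun n ↦ by simpa only [sub_eq_add_neg] using one_sub_mul_pow_ne_zero ha hq n)
    (summable_norm_mul_pow a hq)

lemma tendsto_gaussBinom {q : K} (hq : ‖q‖ < 1) {ι : Type*} {l : Filter ι} {u v : ι → ℕ}
    (hu : Tendsto u l atTop) (hv : Tendsto v l atTop) :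
    Tendsto (fun n ↦ gaussBinom q (u n + v n) (v n)) l (𝓝 (qPochhammerInf q q)⁻¹) := by
  have hinf := qPochhammerInf_ne_zero hq hq
  have hlim := tendsto_qPochhammer q hq
  have huv : Tendsto (fun n ↦ u n + v n) l atTop :=
    tendsto_atTop_mono (fun n ↦ Nat.le_add_right _ _) hu
  have hdiv := (hlim.comp huv).div ((hlim.comp hu).mul (hlim.comp hv)) (mul_ne_zero hinf hinf)
  rw [div_mul_cancel_left₀ hinf] at hdiv
  exact hdiv.congr fun n ↦ (gaussBinom_add_eq_div hq (u n) (v n)).symm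

lemma exists_norm_gaussBinom_le {q : K} (hq : ‖q‖ < 1) :
    ∃ B : ℝ, ∀ m j : ℕ, ‖gaussBinom q m j‖ ≤ B := by
  have hlim := tendsto_qPochhammer q hq
  obtain ⟨B, hB⟩ := (Metric.isBounded_range_of_tendsto _ hlim).exists_norm_le
  obtain ⟨B', hB'⟩ := (Metric.isBounded_range_of_tendsto _
    (hlim.inv₀ (qPochhammerInf_ne_zero hq hq))).exists_norm_le
  rw [Set.forall_mem_range] at hB hB'
  have hB0 : 0 ≤ B := (norm_nonneg _).trans (hB 0)
  have hB'0 : 0 ≤ B' := (norm_nonneg _).trans (hB' 0)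
  refine ⟨B * (B' * B'), fun m j ↦ ?_⟩
  rcases lt_or_ge m j with hmj | hjm
  · rw [gaussBinom_eq_zero_of_lt q hmj, norm_zero]
    positivity
  · obtain ⟨i, rfl⟩ := Nat.exists_eq_add_of_le' hjm
    rw [gaussBinom_add_eq_div hq, div_eq_mul_inv, mul_inv, norm_mul, norm_mul]
    gcongr
    exacts [hB _, hB' _, hB' _]

theorem hasSum_qPochhammerInf_cube {q : K} (hq : ‖q‖ < 1) :
    HasSum (fun k : ℕ ↦ (-1) ^ k * (2 * k + 1) * q ^ (k + 1).choose 2)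
      (qPochhammerInf q q ^ 3) := by
  set t : ℕ → K := fun k ↦ (-1) ^ k * (2 * k + 1) * q ^ (k + 1).choose 2
  have hbound := norm_neg_one_pow_mul_two_mul_add_one_mul_pow_choose_le q
  have hmajorant := summable_two_mul_add_one_mul_norm_pow_choose hq
  obtain ⟨B, hB⟩ := exists_norm_gaussBinom_le hq
  have hfinite (n : ℕ) :
      ∑' k, t k * gaussBinom q (2 * n + 1) (n + 1 + k) = qPochhammer q q n ^ 2 := by
    rw [← sum_gaussBinom_eq_qPochhammer_sq]
    refine tsum_eq_sum fun k hk ↦ ?_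
    rw [gaussBinom_eq_zero_of_lt q (by rw [mem_range] at hk; omega), mul_zero]
  have hterm (k : ℕ) : Tendsto (fun n ↦ t k * gaussBinom q (2 * n + 1) (n + 1 + k)) atTop
      (𝓝 (t k * (qPochhammerInf q q)⁻¹)) := by
    refine ((tendsto_gaussBinom hq (tendsto_sub_atTop_nat k)
      (tendsto_add_atTop_nat (1 + k))).congr' ?_).const_mul (t k)
    filter_upwards [eventually_ge_atTop k] with n hn
    congr 1 <;> omega
  have hlim : Tendsto (fun n ↦ ∑' k, t k * gaussBinom q (2 * n + 1) (n + 1 + k)) atTop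
      (𝓝 (∑' k, t k * (qPochhammerInf q q)⁻¹)) := by
    refine tendsto_tsum_of_dominated_convergence (hmajorant.mul_right B) hterm
      (.of_forall fun n k ↦ ?_)
    rw [norm_mul]
    exact mul_le_mul (hbound k) (hB _ _) (norm_nonneg _) (by positivity)
  simp only [hfinite] at hlim
  have hsq := tendsto_nhds_unique hlim ((tendsto_qPochhammer q hq).pow 2)
  rw [tsum_mul_right, mul_inv_eq_iff_eq_mul₀ (qPochhammerInf_ne_zero hq hq), ← pow_succ] at hsq
  rw [← hsq]
  exact (Summable.of_norm_bounded hmajorant hbound).hasSum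

-- `k = 2m` and `k = 2m + 1` are matched with the integers `m` and `-(m + 1)`.
theorem hasSum_int_qPochhammerInf_cube {q : K} (hq : ‖q‖ < 1) :
    HasSum (fun n : ℤ ↦ (4 * n + 1) * q ^ (2 * n ^ 2 + n)) (qPochhammerInf q q ^ 3) := by
  refine (Equiv.intEquivNat.hasSum_iff.mpr (hasSum_qPochhammerInf_cube hq)).congr_fun fun n ↦ ?_
  cases n with
  | ofNat m =>
    have hexp : (2 * Int.ofNat m ^ 2 + Int.ofNat m : ℤ) = ((2 * m + 1).choose 2 : ℕ) := by
      qify [Nat.cast_choose_two]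
      simp only [Int.ofNat_eq_natCast, Int.cast_natCast, add_sub_cancel_right]
      ring
    change _ = (-1) ^ (2 * m) * (2 * (2 * m : ℕ) + 1) * q ^ (2 * m + 1).choose 2
    rw [hexp, zpow_natCast, (even_two_mul m).neg_one_pow, one_mul, Int.ofNat_eq_natCast]
    push_cast
    ring
  | negSucc m =>
    have hexp : 2 * Int.negSucc m ^ 2 + Int.negSucc m = ((2 * m + 1 + 1).choose 2 : ℕ) := by
      qify [Nat.cast_choose_two]
      simp only [neg_add_rev, add_sub_cancel_right]
      ring
    change _ = (-1) ^ (2 * m + 1) * (2 * (2 * m + 1 : ℕ) + 1) * q ^ (2 * m + 1 + 1).choose 2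
    rw [hexp, zpow_natCast, (odd_two_mul_add_one m).neg_one_pow, Int.negSucc_eq]
    push_cast
    ring

lemma qPochhammerInf_sq_mul_qPochhammerInf_mul_sq (a : K) {q : K} (hq : ‖q‖ < 1) :
    qPochhammerInf a (q ^ 2) * qPochhammerInf (a * q) (q ^ 2) = qPochhammerInf a q := by
  have hq2 : ‖q ^ 2‖ < 1 := by simpa using pow_lt_one₀ (norm_nonneg q) hq two_ne_zero
  have heven (n : ℕ) : a * (q ^ 2) ^ n = a * q ^ (2 * n) := by ring
  have hodd (n : ℕ) : a * q * (q ^ 2) ^ n = a * q ^ (2 * n + 1) := by ring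
  have hmul_even := multipliable_one_sub_mul_pow a hq2
  have hmul_odd := multipliable_one_sub_mul_pow (a * q) hq2
  simp only [heven, hodd] at hmul_even hmul_odd
  simp only [qPochhammerInf, heven, hodd]
  exact tprod_even_mul_odd (f := fun n ↦ 1 - a * q ^ n) hmul_even hmul_odd

lemma qPochhammerInf_mul_qPochhammerInf_neg (a : K) {q : K} (hq : ‖q‖ < 1) :
    qPochhammerInf a q * qPochhammerInf (-a) q = qPochhammerInf (a ^ 2) (q ^ 2) := by
  rw [qPochhammerInf, qPochhammerInf, qPochhammerInf,
    ← (multipliable_one_sub_mul_pow a hq).tprod_mul (multipliable_one_sub_mul_pow (-a) hq)]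
  congr 1 with n
  ring

theorem qPochhammerInf_neg_mul {q : K} (hq : ‖q‖ < 1) :
    qPochhammerInf (-q) (-q) * (qPochhammerInf q q * qPochhammerInf (q ^ 4) (q ^ 4)) =
      qPochhammerInf (q ^ 2) (q ^ 2) ^ 3 := by
  have hq2 : ‖q ^ 2‖ < 1 := by simpa using pow_lt_one₀ (norm_nonneg q) hq two_ne_zero
  have hpos := qPochhammerInf_sq_mul_qPochhammerInf_mul_sq q hq
  have hneg := qPochhammerInf_sq_mul_qPochhammerInf_mul_sq (-q) (q := -q) (by simpa using hq)
  have hsq := qPochhammerInf_sq_mul_qPochhammerInf_mul_sq (q ^ 2) hq2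
  have hodd := qPochhammerInf_mul_qPochhammerInf_neg q hq2
  rw [neg_sq, neg_mul_neg, ← sq] at hneg
  rw [← sq] at hpos
  rw [← hodd, ← sq] at hsq
  rw [← hpos, ← hneg, show q ^ 4 = (q ^ 2) ^ 2 by ring]
  linear_combination qPochhammerInf (q ^ 2) (q ^ 2) ^ 2 * hsq

end NormedField

lemma dedekindEta_eq_exp_mul_qPochhammerInf (τ : ℂ) :
    dedekindEta τ = exp (Real.pi * I * τ / 12) *
      qPochhammerInf (exp (2 * Real.pi * I * τ)) (exp (2 * Real.pi * I * τ)) := by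
  rw [dedekindEta, qPochhammerInf]
  congr 3 with n
  rw [← exp_nat_mul, ← exp_add]
  ring_nf

lemma dedekindEta_ne_zero {τ : ℂ} (hτ : 0 < τ.im) : dedekindEta τ ≠ 0 := by
  have hq := UpperHalfPlane.norm_exp_two_pi_I_lt_one ⟨τ, hτ⟩
  rw [dedekindEta_eq_exp_mul_qPochhammerInf]
  exact mul_ne_zero (exp_ne_zero _) (qPochhammerInf_ne_zero hq hq)

theorem dedekindEta_two_mul_cube_div {τ : ℂ} (hτ : 0 < τ.im) :
    dedekindEta (2 * τ) ^ 3 / (dedekindEta τ * dedekindEta (4 * τ)) =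
      exp (Real.pi * I * τ / 12) *
        qPochhammerInf (-exp (2 * Real.pi * I * τ)) (-exp (2 * Real.pi * I * τ)) := by
  have hη : dedekindEta τ * dedekindEta (4 * τ) ≠ 0 :=
    mul_ne_zero (dedekindEta_ne_zero hτ) (dedekindEta_ne_zero (by simpa using hτ))
  have hqτ (k : ℕ) : exp (2 * Real.pi * I * (k * τ)) = exp (2 * Real.pi * I * τ) ^ k := by
    rw [← exp_nat_mul]
    ring_nf
  have hexp (k : ℕ) : exp (Real.pi * I * (k * τ) / 12) = exp (Real.pi * I * τ / 12) ^ k := by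
    rw [← exp_nat_mul]
    ring_nf
  have hq2 := hqτ 2
  have hq4 := hqτ 4
  have he2 := hexp 2
  have he4 := hexp 4
  push_cast at hq2 hq4 he2 he4
  rw [div_eq_iff hη]
  simp only [dedekindEta_eq_exp_mul_qPochhammerInf, hq2, hq4, he2, he4]
  rw [mul_pow, ← qPochhammerInf_neg_mul (UpperHalfPlane.norm_exp_two_pi_I_lt_one ⟨τ, hτ⟩)]
  ring

lemma neg_one_zpow_mul_exp_sq_eq (τ : ℂ) (n : ℤ) :
    (-1 : ℂ) ^ n * (4 * (n : ℂ) + 1) * exp (2 * (Real.pi : ℂ) * I * τ * (4 * (n : ℂ) + 1) ^ 2) =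
      exp (2 * Real.pi * I * τ) *
        ((4 * n + 1) * (-exp (2 * Real.pi * I * (8 * τ))) ^ (2 * n ^ 2 + n)) := by
  have hsign : (-1 : ℂ) ^ (2 * n ^ 2 + n) = (-1) ^ n := by
    rw [zpow_add₀ (by norm_num), zpow_mul]
    norm_num
  have hexp : exp (2 * Real.pi * I * τ * (4 * n + 1) ^ 2) =
      exp (2 * Real.pi * I * τ) * exp (2 * Real.pi * I * (8 * τ)) ^ (2 * n ^ 2 + n) := by
    rw [← exp_int_mul, ← exp_add]
    push_cast
    ring_nf
  rw [neg_eq_neg_one_mul (exp _), mul_zpow, hsign, hexp]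
  ring

/-- `E₂(τ) = η(16τ)⁹/(η(8τ)³η(32τ)³) = ∑_{n ∈ ℤ} (−1)ⁿ(4n+1) e^{2πiτ(4n+1)²}`,
with absolute convergence. -/
theorem etaTheta_E2 (τ : ℂ) (hτ : 0 < τ.im) :
    Summable (fun n : ℤ =>
      ‖(-1 : ℂ) ^ n * (4 * (n : ℂ) + 1) *
        Complex.exp (2 * (Real.pi : ℂ) * I * τ * (4 * (n : ℂ) + 1) ^ 2)‖) ∧
    dedekindEta (16 * τ) ^ 9 / (dedekindEta (8 * τ) ^ 3 * dedekindEta (32 * τ) ^ 3) =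
      ∑' n : ℤ, (-1 : ℂ) ^ n * (4 * (n : ℂ) + 1) *
        Complex.exp (2 * (Real.pi : ℂ) * I * τ * (4 * (n : ℂ) + 1) ^ 2) := by
  have him : 0 < (8 * τ).im := by simpa using hτ
  have hq := UpperHalfPlane.norm_exp_two_pi_I_lt_one ⟨8 * τ, him⟩
  have hjacobi := (hasSum_int_qPochhammerInf_cube (q := -exp (2 * Real.pi * I * (8 * τ)))
    (by simpa only [norm_neg] using hq)).mul_left (exp (2 * Real.pi * I * τ))
  simp only [neg_one_zpow_mul_exp_sq_eq]
  refine ⟨hjacobi.summable.norm, ?_⟩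
  calc dedekindEta (16 * τ) ^ 9 / (dedekindEta (8 * τ) ^ 3 * dedekindEta (32 * τ) ^ 3)
      = (dedekindEta (2 * (8 * τ)) ^ 3 /
          (dedekindEta (8 * τ) * dedekindEta (4 * (8 * τ)))) ^ 3 := by
        ring_nf
    _ = exp (2 * Real.pi * I * τ) * qPochhammerInf (-exp (2 * Real.pi * I * (8 * τ)))
          (-exp (2 * Real.pi * I * (8 * τ))) ^ 3 := by
        rw [dedekindEta_two_mul_cube_div him, mul_pow, ← exp_nat_mul]
        push_cast
        ring_nf
    _ = _ := hjacobi.tsum_eq.symm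
end

section
/- Let τ ∈ ℍ and let a ∈ (−1/2, 1/2) with a ≠ 0. Then the integral of g_{a+1/2, 1}(z)/√(−i(z+τ)) along the vertical path from 0 to i∞ converges and equals −e(−a²τ/2 + a)·h(aτ − 1/2; τ) + e(a)/√(−iτ). That is, i·∫₀^∞ g_{a+1/2,1}(it)/√(−i(it+τ)) dt = −e^{2πi(−a²τ/2 + a)}·h(aτ − 1/2; τ) + e^{2πia}/√(−iτ). -/
open Complex

/-- Zwegers' unary theta function
`g_{a,b}(τ) = ∑_{n∈ℤ} (n+a) e^{2πib(n+a)} e^{πiτ(n+a)²}`. -/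
noncomputable def gUnary (a b : ℝ) (τ : ℂ) : ℂ :=
  ∑' n : ℤ, ((n : ℂ) + a) * Complex.exp (2 * (Real.pi : ℂ) * I * b * ((n : ℂ) + a)) *
    Complex.exp ((Real.pi : ℂ) * I * τ * ((n : ℂ) + a) ^ 2)

/-- The Mordell integral `h(u;τ) = ∫_ℝ e^{πiτx² − 2πux}/cosh(πx) dx`. -/
noncomputable def mordellH (u τ : ℂ) : ℂ :=
  ∫ x : ℝ, Complex.exp ((Real.pi : ℂ) * I * τ * (x : ℂ) ^ 2 - 2 * (Real.pi : ℂ) * u * x) /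
    Complex.cosh ((Real.pi : ℂ) * x)

/-!
Put `s = -iτ`. On the imaginary axis `g_{a+1/2,1}(it)` is `-e(a)` times the odd theta kernel
`∑ (n + a + 1/2) e^{-π(n + a + 1/2)²t}`. Writing `1/√(t + s)` as the Gaussian integral
`∫ e^{-π(t + s)y²} dy` and exchanging the two integrals leaves `∫ e^{-πsy²} L(y) dy`, where `L` is
the Laplace transform of the theta kernel at `πy²`. Termwise integration turns `L` into the partial
fraction expansion of `Re cot π(a + 1/2 + iy)`. The imaginary part of this cotangent is odd in `y`,
so it may be restored under the integral; as `cot π(a + 1/2 + iy) = -i tanh π(y - ia)`, shifting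
the contour by `ia`, which crosses no pole because `|a| < 1/2`, gives the Gaussian integral of
`tanh πx`. The Mordell integral reduces to the same one: completing the square, its integrand
becomes a Gaussian times `e^{πx}/cosh πx = 1 + tanh πx`, and the `1` contributes `1/√s`.
-/

open MeasureTheory Filter Topology Set Interval HurwitzZeta
open scoped Real

section ContourShift

theorem integral_add_mul_I_eq_integral {E : Type*} [NormedAddCommGroup E] [NormedSpace ℂ E]
    {f : ℂ → E} {a : ℝ} (hd : DifferentiableOn ℂ f (univ ×ℂ [[0, a]]))
    (h₀ : Integrable fun x : ℝ ↦ f x) (h₁ : Integrable fun x : ℝ ↦ f (x + a * I))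
    (hv : Tendsto (fun T : ℝ ↦ ∫ y in (0 : ℝ)..a, f (T + y * I)) (cocompact ℝ) (𝓝 0)) :
    ∫ x : ℝ, f (x + a * I) = ∫ x : ℝ, f x := by
  rw [cocompact_eq_atBot_atTop, tendsto_sup] at hv
  have hrect (T : ℝ) : (∫ x in (-T)..T, f x) - (∫ x in (-T)..T, f (x + a * I)) +
      I • (∫ y in (0 : ℝ)..a, f (T + y * I)) -
      I • (∫ y in (0 : ℝ)..a, f ((-T : ℝ) + y * I)) = 0 := by
    simpa using integral_boundary_rect_eq_zero_of_differentiableOn f (-T) (T + a * I)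
      (hd.mono fun z hz ↦ ⟨mem_univ _, by simpa using hz.2⟩)
  have hlim := (((intervalIntegral_tendsto_integral h₀ tendsto_neg_atTop_atBot tendsto_id).sub
    (intervalIntegral_tendsto_integral h₁ tendsto_neg_atTop_atBot tendsto_id)).add
    (hv.2.const_smul I)).sub ((hv.1.comp tendsto_neg_atTop_atBot).const_smul I)
  have hzero := tendsto_nhds_unique hlim (tendsto_const_nhds.congr fun T ↦ (hrect T).symm)
  rw [smul_zero, add_zero, sub_zero] at hzero
  exact (sub_eq_zero.mp hzero).symm

variable {b : ℂ} {a C : ℝ} {g : ℂ → ℂ}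

theorem tendsto_cexp_neg_mul_sq_add_mul_I_cocompact (hb : 0 < b.re) (y : ℝ) :
    Tendsto (fun x : ℝ ↦ cexp (-b * (x + y * I) ^ 2)) (cocompact ℝ) (𝓝 0) := by
  have h := cexp_neg_quadratic_isLittleO_abs_rpow_cocompact (a := -b) (by simpa using hb)
    (-2 * b * y * I) 0
  simp only [Real.rpow_zero, Asymptotics.isLittleO_one_iff] at h
  have h' := h.const_mul (cexp (b * y ^ 2))
  simp only [mul_zero, ← Complex.exp_add] at h'
  refine h'.congr fun x ↦ congrArg cexp ?_
  linear_combination b * y ^ 2 * I_sq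

theorem norm_cexp_neg_mul_sq_add_mul_I_le (hb : 0 < b.re) {y : ℝ} (hy : |y| ≤ |a|) (x : ℝ) :
    ‖cexp (-b * (x + y * I) ^ 2)‖ ≤ rexp (a ^ 2 * (b.im ^ 2 / b.re + b.re)) := by
  rw [GaussianFourier.norm_cexp_neg_mul_sq_add_mul_I' hb.ne', Real.exp_le_exp]
  have hsq : y ^ 2 * (b.im ^ 2 / b.re + b.re) ≤ a ^ 2 * (b.im ^ 2 / b.re + b.re) := by
    gcongr ?_ * _
    exact sq_le_sq.mpr hy
  nlinarith [mul_nonneg hb.le (sq_nonneg (x - b.im * y / b.re))]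

theorem integrable_cexp_neg_mul_sq_mul_of_bounded (hb : 0 < b.re)
    (hg : ContinuousOn g (univ ×ℂ [[0, a]])) (hC : ∀ z ∈ univ ×ℂ [[0, a]], ‖g z‖ ≤ C)
    {y : ℝ} (hy : y ∈ [[0, a]]) :
    Integrable fun x : ℝ ↦ cexp (-b * (x + y * I) ^ 2) * g (x + y * I) := by
  have hmem (x : ℝ) : (x + y * I : ℂ) ∈ univ ×ℂ [[0, a]] := ⟨mem_univ _, by simpa using hy⟩
  refine (GaussianFourier.integrable_cexp_neg_mul_sq_add_real_mul_I hb y).mul_bdd (c := C) ?_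
    (.of_forall fun x ↦ hC _ (hmem x))
  exact (hg.comp_continuous (by fun_prop) hmem).aestronglyMeasurable

theorem integral_cexp_neg_mul_sq_mul_add_mul_I (hb : 0 < b.re)
    (hg : DifferentiableOn ℂ g (univ ×ℂ [[0, a]])) (hC : ∀ z ∈ univ ×ℂ [[0, a]], ‖g z‖ ≤ C) :
    ∫ x : ℝ, cexp (-b * (x + a * I) ^ 2) * g (x + a * I) =
      ∫ x : ℝ, cexp (-b * x ^ 2) * g x := by
  have hint {y : ℝ} (hy : y ∈ [[0, a]]) :=
    integrable_cexp_neg_mul_sq_mul_of_bounded hb hg.continuousOn hC hy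
  refine integral_add_mul_I_eq_integral (f := fun z ↦ cexp (-b * z ^ 2) * g z)
    (.mul (by fun_prop) hg) (by simpa using hint left_mem_uIcc) (hint right_mem_uIcc) ?_
  have hmem {y : ℝ} (hy : y ∈ Ι 0 a) (T : ℝ) : (T + y * I : ℂ) ∈ univ ×ℂ [[0, a]] :=
    ⟨mem_univ _, by simpa using uIoc_subset_uIcc hy⟩
  rw [cocompact_eq_atBot_atTop,
    ← intervalIntegral.integral_zero (E := ℂ) (μ := volume) (a := 0) (b := a)]
  refine intervalIntegral.tendsto_integral_filter_of_dominated_convergence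
    (μ := volume) (fun _ ↦ rexp (a ^ 2 * (b.im ^ 2 / b.re + b.re)) * C) (.of_forall fun T ↦ ?_)
    (.of_forall fun T ↦ .of_forall fun y hy ↦ ?_) intervalIntegrable_const
    (.of_forall fun y hy ↦ ?_)
  · refine ContinuousOn.aestronglyMeasurable ?_ measurableSet_uIoc
    exact .mul (by fun_prop) (hg.continuousOn.comp (by fun_prop) fun y hy ↦ hmem hy T)
  · rw [norm_mul]
    gcongr
    · exact norm_cexp_neg_mul_sq_add_mul_I_le hb
        (by simpa using abs_sub_left_of_mem_uIcc (uIoc_subset_uIcc hy)) T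
    · exact hC _ (hmem hy T)
  · rw [← cocompact_eq_atBot_atTop]
    exact (tendsto_cexp_neg_mul_sq_add_mul_I_cocompact hb y).zero_mul_isBoundedUnder_le
      (isBoundedUnder_of ⟨C, fun T ↦ hC _ (hmem hy T)⟩)

end ContourShift

section Tanh

theorem re_cosh (w : ℂ) : (cosh w).re = Real.cosh w.re * Real.cos w.im := by
  conv_lhs => rw [← re_add_im w, cosh_add, cosh_mul_I, sinh_mul_I]
  simp [← ofReal_cosh, ← ofReal_sinh, ← ofReal_cos, ← ofReal_sin]

theorem norm_sinh_le_cosh_re (w : ℂ) : ‖sinh w‖ ≤ Real.cosh w.re := by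
  have h := norm_sub_le (cexp w) (cexp (-w))
  rw [norm_exp, norm_exp, neg_re] at h
  rw [sinh, norm_div, Complex.norm_ofNat, Real.cosh_eq]
  gcongr

variable {w : ℂ} {θ : ℝ}

theorem cosh_re_mul_cos_le_norm_cosh (hθ : θ ≤ π) (hw : |w.im| ≤ θ) :
    Real.cosh w.re * Real.cos θ ≤ ‖cosh w‖ :=
  calc
    Real.cosh w.re * Real.cos θ ≤ Real.cosh w.re * Real.cos |w.im| := by
      gcongr
      exact Real.cos_le_cos_of_nonneg_of_le_pi (abs_nonneg _) hθ hw
    _ = (cosh w).re := by rw [Real.cos_abs, re_cosh]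
    _ ≤ ‖cosh w‖ := re_le_norm _

theorem cosh_ne_zero_of_abs_im_lt (hw : |w.im| < π / 2) : cosh w ≠ 0 := by
  have hcos : 0 < Real.cos w.im := Real.cos_pos_of_mem_Ioo (abs_lt.mp hw)
  intro h
  have hre := re_cosh w
  rw [h, zero_re] at hre
  exact (mul_pos (Real.cosh_pos _) hcos).ne hre

theorem differentiableAt_tanh (hw : cosh w ≠ 0) : DifferentiableAt ℂ tanh w :=
  (differentiableAt_sinh.div differentiableAt_cosh hw).congr_of_eventuallyEq
    (.of_forall tanh_eq_sinh_div_cosh)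

theorem norm_tanh_le_inv_cos (hθ : θ < π / 2) (hw : |w.im| ≤ θ) :
    ‖tanh w‖ ≤ (Real.cos θ)⁻¹ := by
  have hcos : 0 < Real.cos θ :=
    Real.cos_pos_of_mem_Ioo ⟨by linarith [abs_nonneg w.im, Real.pi_pos], hθ⟩
  have hcosh : 0 < ‖cosh w‖ := norm_pos_iff.mpr (cosh_ne_zero_of_abs_im_lt (hw.trans_lt hθ))
  rw [tanh_eq_sinh_div_cosh, norm_div, div_le_iff₀ hcosh, ← div_eq_inv_mul, le_div_iff₀ hcos]
  exact (mul_le_mul_of_nonneg_right (norm_sinh_le_cosh_re w) hcos.le).trans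
    (cosh_re_mul_cos_le_norm_cosh (by linarith [Real.pi_pos]) hw)

end Tanh

theorem cot_pi_mul_add_half_add_mul_I (a y : ℝ) :
    cot (π * ((a + 1 / 2 : ℝ) + y * I)) = -I * tanh (π * (y - a * I)) := by
  have h : (π * ((a + 1 / 2 : ℝ) + y * I) : ℂ) = π / 2 - -(π * (y - a * I)) * I := by
    push_cast
    linear_combination π * a * I_sq
  rw [h, ← tan_inv_eq_cot, tan_pi_div_two_sub, inv_inv, tan_mul_I, tanh_neg]
  ring

section OddGaussian

/-- The odd function `x ↦ x e^{-π(x²+y²)t}`. At the points of `c + ℤ` its values are the terms of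
the series of `oddKernel c`, weighted by `e^{-πy²t}`. -/
noncomputable def oddGaussian (y x t : ℝ) : ℝ := x * rexp (-(π * (x ^ 2 + y ^ 2)) * t)

variable (y : ℝ)

theorem oddGaussian_neg (x t : ℝ) : oddGaussian y (-x) t = -oddGaussian y x t := by
  simp [oddGaussian]

theorem integrableOn_oddGaussian (x : ℝ) : IntegrableOn (oddGaussian y x) (Ioi 0) := by
  rcases eq_or_ne x 0 with rfl | hx
  · exact integrableOn_zero.congr_fun (fun t _ ↦ by simp [oddGaussian]) measurableSet_Ioi
  · exact (integrableOn_exp_mul_Ioi (neg_lt_zero.mpr (by positivity)) 0).const_mul x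

theorem integral_oddGaussian (x : ℝ) :
    ∫ t in Ioi 0, oddGaussian y x t = x / (π * (x ^ 2 + y ^ 2)) := by
  rcases eq_or_ne x 0 with rfl | hx
  · simp [oddGaussian]
  · have hr : -(π * (x ^ 2 + y ^ 2)) < 0 := neg_lt_zero.mpr (by positivity)
    simp only [oddGaussian]
    rw [integral_const_mul, integral_exp_mul_Ioi hr, mul_zero, Real.exp_zero, neg_div_neg_eq,
      mul_one_div]

theorem integral_oddGaussian_eq_re (x : ℝ) :
    ∫ t in Ioi 0, oddGaussian y x t = π⁻¹ * (1 / (x + y * I) : ℂ).re := by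
  rw [integral_oddGaussian, one_div, inv_re, normSq_add_mul_I]
  simp only [add_re, ofReal_re, re_ofReal_mul, I_re, mul_zero, add_zero]
  rw [mul_comm π, ← div_div, div_eq_inv_mul]

/- Writing `E₁ ≥ E₂` for the exponentials at `x₁ ≤ x₂`, the right-hand side is
`(x₂ - x₁) E₂ + x₁ (E₁ - E₂)`, which bounds `|x₂ E₂ - x₁ E₁|`. -/
theorem norm_oddGaussian_sub_le {x₁ x₂ t : ℝ} (hx₁ : 0 < x₁) (h₁₂ : x₁ ≤ x₂) (ht : 0 ≤ t) :
    ‖oddGaussian y x₂ t - oddGaussian y x₁ t‖ ≤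
      oddGaussian y x₁ t + (1 - 2 * x₁ / x₂) * oddGaussian y x₂ t := by
  have hx₂ : 0 < x₂ := hx₁.trans_le h₁₂
  have hpos : 0 ≤ (x₂ - x₁) * rexp (-(π * (x₂ ^ 2 + y ^ 2)) * t) :=
    mul_nonneg (sub_nonneg.mpr h₁₂) (Real.exp_nonneg _)
  have hdecay : x₁ * rexp (-(π * (x₂ ^ 2 + y ^ 2)) * t) ≤
      x₁ * rexp (-(π * (x₁ ^ 2 + y ^ 2)) * t) := by
    gcongr
  have hmul : (1 - 2 * x₁ / x₂) * oddGaussian y x₂ t =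
      (x₂ - 2 * x₁) * rexp (-(π * (x₂ ^ 2 + y ^ 2)) * t) := by
    rw [oddGaussian]
    field_simp
  rw [hmul, Real.norm_eq_abs, abs_le]
  simp only [oddGaussian]
  constructor <;> linarith

/- Only paired terms work: `∫ |oddGaussian y x|` is of order `1 / x`, which is not summable over
`x ∈ c + ℤ`, whereas the bound below is of order `1 / x²` for bounded gaps. -/
theorem integral_norm_oddGaussian_neg_add_le {x₁ x₂ : ℝ} (hx₁ : 0 < x₁) (h₁₂ : x₁ ≤ x₂) :
    ∫ t in Ioi 0, ‖oddGaussian y (-x₁) t + oddGaussian y x₂ t‖ ≤ 3 / π * (1 / x₁ - 1 / x₂) := by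
  have hx₂ : 0 < x₂ := hx₁.trans_le h₁₂
  have hint := integrableOn_oddGaussian y
  calc
    _ ≤ ∫ t in Ioi 0, (oddGaussian y x₁ t + (1 - 2 * x₁ / x₂) * oddGaussian y x₂ t) := by
      refine setIntegral_mono_on ((hint (-x₁)).add (hint x₂)).norm
        ((hint x₁).add ((hint x₂).const_mul _)) measurableSet_Ioi fun t ht ↦ ?_
      rw [oddGaussian_neg, neg_add_eq_sub]
      exact norm_oddGaussian_sub_le y hx₁ h₁₂ (le_of_lt ht)
    _ = x₁ / (π * (x₁ ^ 2 + y ^ 2)) + (1 - 2 * x₁ / x₂) * (x₂ / (π * (x₂ ^ 2 + y ^ 2))) := by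
      rw [integral_add (hint x₁) ((hint x₂).const_mul _), integral_const_mul,
        integral_oddGaussian, integral_oddGaussian]
    _ = (x₂ - x₁) * (x₁ * (x₂ + x₁) / (x₁ ^ 2 + y ^ 2) + 1) / (π * (x₂ ^ 2 + y ^ 2)) := by
      field_simp
      ring
    _ ≤ (x₂ - x₁) * (x₁ * (x₂ + x₂) / x₁ ^ 2 + x₂ / x₁) / (π * x₂ ^ 2) := by
      have : 0 ≤ x₂ - x₁ := sub_nonneg.mpr h₁₂
      have : 1 ≤ x₂ / x₁ := (one_le_div hx₁).mpr h₁₂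
      gcongr <;> nlinarith [sq_nonneg y]
    _ = 3 / π * (1 / x₁ - 1 / x₂) := by
      field_simp
      ring

end OddGaussian

section OddKernel

theorem integrableOn_oddKernel (c : UnitAddCircle) : IntegrableOn (oddKernel c) (Ioi 0) := by
  have h := ((isStrong_hurwitzOddFEPair c).hasMellin 1).1
  simpa [MellinConvergent, hurwitzOddFEPair, IntegrableOn] using h.re

theorem hasSum_oddGaussian_oddKernel (c y : ℝ) {t : ℝ} (ht : 0 < t) :
    HasSum (fun n : ℤ ↦ oddGaussian y (c + n) t) (oddKernel c t * rexp (-(π * y ^ 2) * t)) := by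
  refine ((hasSum_int_oddKernel c ht).mul_right _).congr_fun fun n ↦ ?_
  rw [oddGaussian, mul_assoc, ← Real.exp_add]
  ring_nf

theorem hasSum_oddGaussian_sub_add (c y : ℝ) {t : ℝ} (ht : 0 < t) :
    HasSum (fun n : ℕ ↦ oddGaussian y (c - (n + 1)) t + oddGaussian y (c + (n + 1)) t)
      (oddKernel c t * rexp (-(π * y ^ 2) * t) - oddGaussian y c t) := by
  have h := (hasSum_nat_add_iff' 1).mpr (hasSum_oddGaussian_oddKernel c y ht).nat_add_neg
  simp only [Finset.sum_range_one, Nat.cast_zero, neg_zero, Int.cast_zero, add_zero,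
    add_sub_add_right_eq_sub] at h
  refine h.congr_fun fun n ↦ ?_
  push_cast
  rw [add_comm, ← sub_eq_add_neg]

variable {c : ℝ}

theorem add_mul_I_mem_integerComplement (hc₀ : 0 < c) (hc₁ : c < 1) (y : ℝ) :
    (c + y * I : ℂ) ∈ integerComplement := by
  rintro ⟨n, hn⟩
  have hre : (n : ℝ) = c := by simpa using congrArg re hn
  rw [← hre] at hc₀ hc₁
  norm_cast at hc₀ hc₁
  lia

theorem summable_one_div_sub_one_div (hc₀ : 0 < c) (hc₁ : c < 1) :
    Summable fun n : ℕ ↦ 1 / (n + 1 - c) - 1 / (c + (n + 1)) := by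
  have hc : (c : ℂ) ∈ integerComplement := by
    simpa using add_mul_I_mem_integerComplement hc₀ hc₁ 0
  refine Complex.summable_ofReal.mp ((summable_cotTerm hc).neg.congr fun n ↦ ?_)
  rw [cotTerm, ← neg_sub (n + 1 : ℂ) c, one_div_neg_eq_neg_one_div]
  push_cast
  ring

theorem hasSum_integral_oddGaussian_sub_add {y : ℝ} (hz : (c + y * I : ℂ) ∈ integerComplement) :
    HasSum (fun n : ℕ ↦ ∫ t in Ioi 0,
      (oddGaussian y (c - (n + 1)) t + oddGaussian y (c + (n + 1)) t))
      ((cot (π * (c + y * I))).re - ∫ t in Ioi 0, oddGaussian y c t) := by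
  have hcot := (hasSum_re (summable_cotTerm hz).hasSum).mul_left π⁻¹
  have hval : π⁻¹ * (∑' n, cotTerm (c + y * I) n).re =
      (cot (π * (c + y * I))).re - ∫ t in Ioi 0, oddGaussian y c t := by
    simp only [cotTerm]
    rw [← cot_series_rep' hz, integral_oddGaussian_eq_re, sub_re, re_ofReal_mul]
    field_simp
  rw [hval] at hcot
  refine hcot.congr_fun fun n ↦ ?_
  rw [integral_add (integrableOn_oddGaussian y _) (integrableOn_oddGaussian y _),
    integral_oddGaussian_eq_re, integral_oddGaussian_eq_re, ← mul_add, ← add_re, cotTerm]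
  push_cast
  ring_nf

theorem integral_oddKernel_mul_exp (hc₀ : 0 < c) (hc₁ : c < 1) (y : ℝ) :
    ∫ t in Ioi 0, oddKernel c t * rexp (-(π * y ^ 2) * t) = (cot (π * (c + y * I))).re := by
  have hint := integrableOn_oddGaussian y
  have hbound (n : ℕ) := integral_norm_oddGaussian_neg_add_le y (x₁ := n + 1 - c)
    (x₂ := c + (n + 1)) (by linarith [n.cast_nonneg (α := ℝ)]) (by linarith)
  simp only [neg_sub] at hbound
  have hsummable := ((summable_one_div_sub_one_div hc₀ hc₁).mul_left (3 / π)).of_nonneg_of_le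
    (fun n ↦ integral_nonneg fun _ ↦ norm_nonneg _) hbound
  have hswap := (hasSum_integral_of_summable_integral_norm
    (fun n : ℕ ↦ (hint (c - (n + 1))).add (hint (c + (n + 1)))) hsummable).unique
    (hasSum_integral_oddGaussian_sub_add (add_mul_I_mem_integerComplement hc₀ hc₁ y))
  have hweighted : IntegrableOn (fun t ↦ oddKernel c t * rexp (-(π * y ^ 2) * t)) (Ioi 0) := by
    refine (integrableOn_oddKernel c).mul_bdd (c := 1) (by fun_prop) ?_
    filter_upwards [ae_restrict_mem measurableSet_Ioi] with t ht
    rw [Real.norm_of_nonneg (Real.exp_nonneg _), Real.exp_le_one_iff, neg_mul, neg_nonpos]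
    exact mul_nonneg (by positivity) (le_of_lt ht)
  simp only [Pi.add_apply] at hswap
  rw [setIntegral_congr_fun measurableSet_Ioi
      fun t ht ↦ (hasSum_oddGaussian_sub_add c y ht).tsum_eq,
    integral_sub hweighted (hint c)] at hswap
  exact sub_left_inj.mp hswap

end OddKernel

section Fubini

variable {s : ℂ} {K : ℝ → ℂ}

theorem integral_cexp_neg_pi_mul_sq_add_mul_I (hs : 0 < s.re) (a : ℝ) :
    ∫ x : ℝ, cexp (-(π * s) * (x + a * I) ^ 2) = 1 / s ^ (1 / 2 : ℂ) := by
  have harg : s.arg ≠ π := fun h ↦ (arg_eq_pi_iff.mp h).1.not_gt hs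
  rw [GaussianFourier.integral_cexp_neg_mul_sq_add_real_mul_I
      (by simpa using mul_pos Real.pi_pos hs),
    div_mul_cancel_left₀ (ofReal_ne_zero.mpr Real.pi_ne_zero), inv_cpow _ _ harg, one_div (s ^ _)]

theorem integrable_prod_mul_cexp_neg_pi (hs : 0 < s.re) (hK : IntegrableOn K (Ioi 0)) :
    Integrable (fun p : ℝ × ℝ ↦ K p.1 * cexp (-(π * (p.1 + s)) * p.2 ^ 2))
      ((volume.restrict (Ioi 0)).prod volume) := by
  have hgauss := integrable_cexp_neg_mul_sq (b := π * s) (by simpa using mul_pos Real.pi_pos hs)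
  refine (hK.mul_prod hgauss).mono
    (hK.aestronglyMeasurable.comp_fst.mul (by fun_prop)) ?_
  filter_upwards [Measure.quasiMeasurePreserving_fst.ae (ae_restrict_mem measurableSet_Ioi)]
    with ⟨t, y⟩ ht
  have hsplit : -(π * (t + s)) * y ^ 2 = (-(π * t * y ^ 2) : ℝ) + -(π * s) * y ^ 2 := by
    push_cast
    ring
  have hdecay : rexp (-(π * t * y ^ 2)) ≤ 1 := by
    rw [Real.exp_le_one_iff, neg_nonpos]
    exact mul_nonneg (mul_nonneg Real.pi_pos.le (le_of_lt ht)) (sq_nonneg y)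
  rw [norm_mul, norm_mul, hsplit, Complex.exp_add, norm_mul, ← ofReal_exp, Complex.norm_real,
    Real.norm_of_nonneg (Real.exp_nonneg _)]
  gcongr
  exact mul_le_of_le_one_left (norm_nonneg _) hdecay

theorem integral_mul_cexp_neg_pi_mul_sq (hs : 0 < s.re) {t : ℝ} (ht : t ∈ Ioi 0) :
    ∫ y : ℝ, K t * cexp (-(π * (t + s)) * y ^ 2) = K t / (t + s) ^ (1 / 2 : ℂ) := by
  have hts : 0 < (t + s : ℂ).re := by simpa using add_pos ht hs
  simpa [integral_const_mul, div_eq_mul_inv] using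
    congrArg (K t * ·) (integral_cexp_neg_pi_mul_sq_add_mul_I hts 0)

theorem integrableOn_div_add_cpow_half (hs : 0 < s.re) (hK : IntegrableOn K (Ioi 0)) :
    IntegrableOn (fun t : ℝ ↦ K t / (t + s) ^ (1 / 2 : ℂ)) (Ioi 0) :=
  IntegrableOn.congr_fun (integrable_prod_mul_cexp_neg_pi hs hK).integral_prod_left
    (fun _ ht ↦ integral_mul_cexp_neg_pi_mul_sq hs ht) measurableSet_Ioi

theorem integral_div_add_cpow_half (hs : 0 < s.re) (hK : IntegrableOn K (Ioi 0)) :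
    ∫ t in Ioi (0 : ℝ), K t / (t + s) ^ (1 / 2 : ℂ) =
      ∫ y : ℝ, cexp (-(π * s) * y ^ 2) * ∫ t in Ioi (0 : ℝ), K t * cexp (-(π * y ^ 2) * t) := by
  rw [← setIntegral_congr_fun measurableSet_Ioi
      fun t ht ↦ integral_mul_cexp_neg_pi_mul_sq (K := K) hs ht,
    integral_integral_swap (integrable_prod_mul_cexp_neg_pi hs hK)]
  congr 1 with y
  rw [← integral_const_mul]
  congr 1 with t
  rw [mul_left_comm, ← Complex.exp_add]
  ring_nf

end Fubini

theorem integral_mul_re_eq_integral_mul {G w : ℝ → ℂ} (hG : ∀ x, G (-x) = G x)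
    (hw : ∀ x, w (-x) = starRingEnd ℂ (w x)) (hint : Integrable fun x ↦ G x * w x) :
    ∫ x, G x * (w x).re = ∫ x, G x * w x := by
  have hneg (x : ℝ) : G x * starRingEnd ℂ (w x) = G (-x) * w (-x) := by rw [hG, hw]
  calc
    ∫ x, G x * (w x).re = ∫ x, (G x * w x + G (-x) * w (-x)) / 2 := by
      congr 1 with x
      rw [← hneg, re_eq_add_conj]
      ring
    _ = ((∫ x, G x * w x) + ∫ x, G (-x) * w (-x)) / 2 := by
      rw [integral_div, integral_add hint hint.comp_neg]
    _ = ∫ x, G x * w x := by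
      rw [integral_neg_eq_self (fun x ↦ G x * w x), add_self_div_two]

section GaussianTanh

variable {s : ℂ} {a : ℝ}

theorem abs_im_pi_mul_sub_mul_I_le {z : ℂ} (hz : z ∈ univ ×ℂ [[0, a]]) :
    |(π * (z - a * I)).im| ≤ π * |a| := by
  have him : (π * (z - a * I)).im = π * (z.im - a) := by simp
  rw [him, abs_mul, abs_of_pos Real.pi_pos, ← sub_zero |a|]
  gcongr
  simpa [abs_sub_comm] using abs_sub_right_of_mem_uIcc hz.2

theorem differentiableOn_tanh_pi_mul_sub (ha : |a| < 1 / 2) :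
    DifferentiableOn ℂ (fun z ↦ tanh (π * (z - a * I))) (univ ×ℂ [[0, a]]) := by
  intro z hz
  have hcosh : cosh (π * (z - a * I)) ≠ 0 := cosh_ne_zero_of_abs_im_lt <|
    (abs_im_pi_mul_sub_mul_I_le hz).trans_lt (by nlinarith [Real.pi_pos])
  exact ((differentiableAt_tanh hcosh).comp (f := fun z ↦ π * (z - a * I)) z
    (by fun_prop)).differentiableWithinAt

theorem norm_tanh_pi_mul_sub_le (ha : |a| < 1 / 2) {z : ℂ} (hz : z ∈ univ ×ℂ [[0, a]]) :
    ‖tanh (π * (z - a * I))‖ ≤ (Real.cos (π * |a|))⁻¹ :=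
  norm_tanh_le_inv_cos (by nlinarith [Real.pi_pos]) (abs_im_pi_mul_sub_mul_I_le hz)

theorem integrable_cexp_mul_tanh (hs : 0 < s.re) (ha : |a| < 1 / 2) {y : ℝ} (hy : y ∈ [[0, a]]) :
    Integrable fun x : ℝ ↦
      cexp (-(π * s) * (x + y * I) ^ 2) * tanh (π * (x + y * I - a * I)) :=
  integrable_cexp_neg_mul_sq_mul_of_bounded (by simpa using mul_pos Real.pi_pos hs)
    (differentiableOn_tanh_pi_mul_sub ha).continuousOn (fun _ ↦ norm_tanh_pi_mul_sub_le ha) hy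

theorem integral_cexp_mul_tanh (hs : 0 < s.re) (ha : |a| < 1 / 2) :
    ∫ x : ℝ, cexp (-(π * s) * (x + a * I) ^ 2) * tanh (π * x) =
      ∫ x : ℝ, cexp (-(π * s) * x ^ 2) * tanh (π * (x - a * I)) := by
  simpa using integral_cexp_neg_mul_sq_mul_add_mul_I (by simpa using mul_pos Real.pi_pos hs)
    (differentiableOn_tanh_pi_mul_sub ha) fun _ ↦ norm_tanh_pi_mul_sub_le ha

theorem integral_cexp_mul_re_cot (hs : 0 < s.re) (ha : |a| < 1 / 2) :
    ∫ y : ℝ, cexp (-(π * s) * y ^ 2) * (cot (π * ((a + 1 / 2 : ℝ) + y * I))).re =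
      -I * ∫ x : ℝ, cexp (-(π * s) * (x + a * I) ^ 2) * tanh (π * x) := by
  have hint : Integrable fun y : ℝ ↦
      cexp (-(π * s) * y ^ 2) * (-I * tanh (π * (y - a * I))) := by
    simpa [mul_left_comm] using (integrable_cexp_mul_tanh hs ha left_mem_uIcc).const_mul (-I)
  simp_rw [cot_pi_mul_add_half_add_mul_I]
  rw [integral_mul_re_eq_integral_mul (by simp) (fun y ↦ ?_) hint, integral_cexp_mul_tanh hs ha,
    ← integral_const_mul]
  · simp only [mul_left_comm]
  · rw [map_mul, ← tanh_conj]
    simp only [map_mul, map_sub, map_neg, conj_I, conj_ofReal, ofReal_neg, neg_neg]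
    rw [neg_mul, ← mul_neg, ← tanh_neg]
    ring_nf

end GaussianTanh

theorem gUnary_add_half_one (a : ℝ) {t : ℝ} (ht : 0 < t) :
    gUnary (a + 1 / 2) 1 (I * t) =
      -cexp (2 * π * I * a) * oddKernel ((a + 1 / 2 : ℝ) : UnitAddCircle) t := by
  have hsum := (hasSum_ofReal.mpr (hasSum_int_oddKernel (a + 1 / 2) ht)).mul_left
    (-cexp (2 * π * I * a))
  rw [← hsum.tsum_eq, gUnary]
  congr 1 with n
  have hphase : cexp (2 * π * I * (1 : ℝ) * (n + (a + 1 / 2 : ℝ))) = -cexp (2 * π * I * a) := by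
    have hexponent : 2 * π * I * (1 : ℝ) * (n + (a + 1 / 2 : ℝ)) =
        2 * π * I * a + π * I + n * (2 * π * I) := by
      push_cast
      ring
    rw [hexponent, Complex.exp_add, exp_int_mul_two_pi_mul_I, mul_one, exp_add_pi_mul_I]
  have hgauss : cexp (π * I * (I * t) * (n + (a + 1 / 2 : ℝ)) ^ 2) =
      (rexp (-π * (n + (a + 1 / 2)) ^ 2 * t) : ℂ) := by
    push_cast
    congr 1
    linear_combination π * t * (n + (a + 1 / 2)) ^ 2 * I_sq
  rw [hphase, hgauss]
  push_cast
  ring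

theorem cexp_mul_mordellH {τ : ℂ} (hτ : 0 < τ.im) {a : ℝ} (ha : |a| < 1 / 2) :
    cexp (-(π * I * a ^ 2 * τ)) * mordellH (a * τ - 1 / 2) τ = 1 / (-I * τ) ^ (1 / 2 : ℂ) +
      ∫ x : ℝ, cexp (-(π * (-I * τ)) * (x + a * I) ^ 2) * tanh (π * x) := by
  have hs : 0 < (-I * τ).re := by simpa using hτ
  have hgauss := GaussianFourier.integrable_cexp_neg_mul_sq_add_real_mul_I
    (b := π * (-I * τ)) (by simpa using mul_pos Real.pi_pos hτ) a
  have htanh : Integrable fun x : ℝ ↦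
      cexp (-(π * (-I * τ)) * (x + a * I) ^ 2) * tanh (π * x) := by
    simpa using integrable_cexp_mul_tanh hs ha right_mem_uIcc
  rw [← integral_cexp_neg_pi_mul_sq_add_mul_I hs a, ← integral_add hgauss htanh, mordellH,
    ← integral_const_mul]
  congr 1 with x
  have hcosh : cosh (π * x) ≠ 0 := cosh_ne_zero_of_abs_im_lt (by simp [Real.pi_pos])
  have hexp : cexp (-(π * I * a ^ 2 * τ)) *
        cexp (π * I * τ * x ^ 2 - 2 * π * (a * τ - 1 / 2) * x) =
      cexp (-(π * (-I * τ)) * (x + a * I) ^ 2) * (cosh (π * x) + sinh (π * x)) := by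
    rw [cosh_add_sinh, ← Complex.exp_add, ← Complex.exp_add]
    congr 1
    linear_combination (-2 * π * a * x * τ - π * I * τ * a ^ 2) * I_sq
  rw [← mul_div_assoc, hexp, tanh_eq_sinh_div_cosh]
  field_simp

theorem integral_oddKernel_div_add_cpow_half {s : ℂ} (hs : 0 < s.re) {a : ℝ} (ha : |a| < 1 / 2) :
    ∫ t in Ioi (0 : ℝ),
        (oddKernel ((a + 1 / 2 : ℝ) : UnitAddCircle) t : ℂ) / (t + s) ^ (1 / 2 : ℂ) =
      -I * ∫ x : ℝ, cexp (-(π * s) * (x + a * I) ^ 2) * tanh (π * x) := by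
  obtain ⟨ha₁, ha₂⟩ := abs_lt.mp ha
  rw [integral_div_add_cpow_half (K := fun t ↦ (oddKernel (a + 1 / 2 : ℝ) t : ℂ)) hs
      (integrableOn_oddKernel _).ofReal,
    ← integral_cexp_mul_re_cot hs ha]
  congr 1 with y
  rw [← integral_oddKernel_mul_exp (by linarith) (by linarith) y, ← integral_complex_ofReal]
  push_cast
  rfl

/-- Lemma 2.7(iii): for `a ∈ (−1/2,1/2) ∖ {0}` and `τ ∈ ℍ`,
`∫_0^{i∞} g_{a+1/2,1}(z)/√(−i(z+τ)) dz = −e(−a²τ/2 + a) h(aτ − 1/2; τ) + e(a)/√(−iτ)`. -/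
theorem eichler_ga1_h (τ : ℂ) (hτ : 0 < τ.im) (a : ℝ)
    (ha₁ : -(1/2) < a) (ha₂ : a < 1/2) (ha₀ : a ≠ 0) :
    MeasureTheory.IntegrableOn
      (fun t : ℝ => gUnary (a + 1/2) 1 (I * t) / ((-I * (I * t + τ)) ^ ((1 : ℂ)/2)))
      (Set.Ioi 0) ∧
    I * ∫ t in Set.Ioi (0 : ℝ),
        gUnary (a + 1/2) 1 (I * t) / ((-I * (I * t + τ)) ^ ((1 : ℂ)/2)) =
      -Complex.exp (2 * (Real.pi : ℂ) * I * (-(a : ℂ) ^ 2 * τ / 2 + (a : ℂ))) *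
        mordellH ((a : ℂ) * τ - 1/2) τ +
        Complex.exp (2 * (Real.pi : ℂ) * I * (a : ℂ)) / ((-I * τ) ^ ((1 : ℂ)/2)) := by
  have ha : |a| < 1 / 2 := abs_lt.mpr ⟨ha₁, ha₂⟩
  have hs : 0 < (-I * τ).re := by simpa using hτ
  have hintegrand (t : ℝ) (ht : t ∈ Ioi 0) :
      -cexp (2 * π * I * a) * (oddKernel ((a + 1 / 2 : ℝ) : UnitAddCircle) t /
        (t + -I * τ) ^ (1 / 2 : ℂ)) =
      gUnary (a + 1 / 2) 1 (I * t) / (-I * (I * t + τ)) ^ ((1 : ℂ) / 2) := by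
    have hbase : -I * (I * t + τ) = t + -I * τ := by linear_combination -(t : ℂ) * I_sq
    rw [gUnary_add_half_one a ht, hbase, mul_div_assoc]
  have hexp : cexp (2 * π * I * (-(a : ℂ) ^ 2 * τ / 2 + a)) =
      cexp (2 * π * I * a) * cexp (-(π * I * a ^ 2 * τ)) := by
    rw [← Complex.exp_add]
    ring_nf
  refine ⟨IntegrableOn.congr_fun ((integrableOn_div_add_cpow_half hs
    (integrableOn_oddKernel _).ofReal).const_mul _) hintegrand measurableSet_Ioi, ?_⟩
  rw [← setIntegral_congr_fun measurableSet_Ioi hintegrand, integral_const_mul,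
    integral_oddKernel_div_add_cpow_half hs ha, hexp, neg_mul (cexp _ * _), mul_assoc (cexp _),
    cexp_mul_mordellH hτ ha]
  linear_combination cexp (2 * π * I * a) *
    (∫ x : ℝ, cexp (-(π * (-I * τ)) * (x + a * I) ^ 2) * tanh (π * x)) * I_sq
end
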